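/- Let n ≥ 1, let a ∈ T_n∖S_n be a singular transformation, and let G be a subgroup of S_n. If the semigroup ⟨G,a⟩∖G is idempotent generated, then ⟨G,a⟩∖G = ⟨a^g | g ∈ G⟩. -/

import Mathlib

/-!
Moving all permutations in a word over `G ∪ {a}` to the right turns it into an element of `G` or
into a product `c h` with `c ∈ C = ⟨a^g | g ∈ G⟩` and `h ∈ G`, because `G` normalizes `C`. For the
same reason the powers of `c h` have the form `c' hᵐ` with `c' ∈ C`. If `c h` is idempotent, it
equals all of its powers, and taking for `m` the order of `h` shows that it lies in `C`. So `C`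
contains all idempotents of `⟨G, a⟩ ∖ G`, hence everything they generate.
-/

open Finset

/-- Transformations of a set `α`, composed left-to-right (acting on the right):
`x (a * b) = (x a) b`. -/
structure Transf (α : Type*) where
  toFun : α → α

namespace Transf

variable {α : Type*}

instance : Semigroup (Transf α) where
  mul a b := ⟨fun x => b.toFun (a.toFun x)⟩
  mul_assoc _ _ _ := rfl

/-- The transformation induced by a permutation. -/
def ofPerm (g : Equiv.Perm α) : Transf α := ⟨g⟩

/-- The rank of a transformation: the cardinality of its image. -/
noncomputable def rank (a : Transf α) : ℕ := Set.ncard (Set.range a.toFun)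

end Transf

/-- The subsemigroup `⟨G, a⟩` generated by `G ∪ {a}`. -/
def genGA {α : Type*} (G : Subgroup (Equiv.Perm α)) (a : Transf α) :
    Subsemigroup (Transf α) :=
  Subsemigroup.closure (insert a (Transf.ofPerm '' (G : Set (Equiv.Perm α))))

/-- The set `⟨G, a⟩ ∖ G`. -/
def genGAminusG {α : Type*} (G : Subgroup (Equiv.Perm α)) (a : Transf α) :
    Set (Transf α) :=
  (genGA G a : Set (Transf α)) \ (Transf.ofPerm '' (G : Set (Equiv.Perm α)))

/-- The set of conjugates `a^g = g⁻¹ a g` with `g ∈ G`. -/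
def conjSet {α : Type*} (G : Subgroup (Equiv.Perm α)) (a : Transf α) : Set (Transf α) :=
  (fun g : Equiv.Perm α => Transf.ofPerm g⁻¹ * a * Transf.ofPerm g) '' (G : Set (Equiv.Perm α))

/-- The subsemigroup `⟨a^g | g ∈ G⟩`. -/
def genConj {α : Type*} (G : Subgroup (Equiv.Perm α)) (a : Transf α) :
    Subsemigroup (Transf α) :=
  Subsemigroup.closure (conjSet G a)

/-- A subset of the transformation semigroup is regular if every element `u` of it
admits `v` in the set with `u = u v u`. -/
def IsRegularSet {α : Type*} (S : Set (Transf α)) : Prop :=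
  ∀ u ∈ S, ∃ v ∈ S, u * v * u = u

/-- A subset of the transformation semigroup is idempotent generated if it coincides with
the subsemigroup generated by its idempotent elements. -/
def IsIdemGen {α : Type*} (S : Set (Transf α)) : Prop :=
  S = ↑(Subsemigroup.closure {u | u ∈ S ∧ u * u = u})

/-- `T` is a transversal for the partition `P`: it meets each class in exactly one point. -/
def IsTransversal {α : Type*} [DecidableEq α] [Fintype α] (T : Finset α)
    (P : Finpartition (Finset.univ : Finset α)) : Prop :=
  ∀ p ∈ P.parts, (T ∩ p).card = 1

/-- The universal transversal property: for every subset `I` and every partition `P`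
with exactly `|I|` classes, some `G`-translate of `I` is a transversal for `P`. -/
def HasUTP {α : Type*} [DecidableEq α] [Fintype α] (G : Subgroup (Equiv.Perm α)) : Prop :=
  ∀ (I : Finset α) (P : Finpartition (Finset.univ : Finset α)),
    P.parts.card = I.card → ∃ g ∈ G, IsTransversal (I.image ⇑g) P

section Normalizes

/-- An element `u` normalizes a subsemigroup `C` if `u C ⊆ C u`. For invertible `u` this says
`u C u⁻¹ ⊆ C`, but no inverse has to be named. -/
def Normalizes {M : Type*} [Mul M] (u : M) (C : Subsemigroup M) : Prop :=
  ∀ c ∈ C, ∃ d ∈ C, SemiconjBy u c d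

theorem Normalizes.closure {M : Type*} [Semigroup M] {u : M} {s : Set M}
    (h : ∀ x ∈ s, ∃ y ∈ s, SemiconjBy u x y) :
    Normalizes u (Subsemigroup.closure s) := by
  intro c hc
  induction hc using Subsemigroup.closure_induction with
  | mem x hx =>
    obtain ⟨y, hy, hxy⟩ := h x hx
    exact ⟨y, Subsemigroup.subset_closure hy, hxy⟩
  | mul x₁ x₂ _ _ ih₁ ih₂ =>
    obtain ⟨y₁, hy₁, h₁⟩ := ih₁
    obtain ⟨y₂, hy₂, h₂⟩ := ih₂
    exact ⟨y₁ * y₂, mul_mem hy₁ hy₂, h₁.mul_right h₂⟩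

variable {M : Type*} [Monoid M] {C : Subsemigroup M} {U : Submonoid M} {c u x : M}

theorem Normalizes.exists_mul_pow_eq (h : Normalizes u C) (hc : c ∈ C) (n : ℕ) :
    ∃ d ∈ C, (c * u) ^ (n + 1) = d * u ^ (n + 1) := by
  induction n with
  | zero => exact ⟨c, hc, by simp only [zero_add, pow_one]⟩
  | succ n ih =>
    obtain ⟨d, hd, hpow⟩ := ih
    obtain ⟨d', hd', hud⟩ := h d hd
    refine ⟨c * d', mul_mem hc hd', ?_⟩
    calc (c * u) ^ (n + 1 + 1) = c * (u * d) * u ^ (n + 1) := by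
          rw [pow_succ', hpow]; simp only [mul_assoc]
      _ = c * d' * u ^ (n + 1 + 1) := by
          rw [hud.eq, pow_succ' u (n + 1)]; simp only [mul_assoc]

theorem Normalizes.mul_mem_of_isIdempotentElem (h : Normalizes u C) (hu : IsOfFinOrder u)
    (hc : c ∈ C) (he : IsIdempotentElem (c * u)) : c * u ∈ C := by
  obtain ⟨m, hm, hum⟩ := isOfFinOrder_iff_pow_eq_one.1 hu
  obtain ⟨n, rfl⟩ := Nat.exists_eq_add_one.2 hm
  obtain ⟨d, hd, hpow⟩ := h.exists_mul_pow_eq hc n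
  rwa [← he.pow_succ_eq n, hpow, hum, mul_one]

theorem mem_or_exists_mul_eq_of_mem_closure_union (h : ∀ u ∈ U, Normalizes u C)
    (hx : x ∈ Subsemigroup.closure (C ∪ U : Set M)) :
    x ∈ U ∨ ∃ c ∈ C, ∃ u ∈ U, c * u = x := by
  induction hx using Subsemigroup.closure_induction with
  | mem x hx =>
    rcases hx with hC | hU
    · exact .inr ⟨x, hC, 1, one_mem U, mul_one x⟩
    · exact .inl hU
  | mul x y _ _ ihx ihy =>
    rcases ihx with hx | ⟨c, hc, u, hu, rfl⟩ <;> rcases ihy with hy | ⟨d, hd, v, hv, rfl⟩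
    · exact .inl (mul_mem hx hy)
    · obtain ⟨d', hd', hxd⟩ := h x hx d hd
      exact .inr ⟨d', hd', x * v, mul_mem hx hv, by rw [← mul_assoc, ← hxd.eq, mul_assoc]⟩
    · exact .inr ⟨c, hc, u * y, mul_mem hu hy, (mul_assoc c u y).symm⟩
    · obtain ⟨d', hd', hud⟩ := h u hu d hd
      refine .inr ⟨c * d', mul_mem hc hd', u * v, mul_mem hu hv, ?_⟩
      calc c * d' * (u * v) = c * (d' * u) * v := by simp only [mul_assoc]
        _ = c * u * (d * v) := by rw [← hud.eq]; simp only [mul_assoc]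

theorem mem_of_isIdempotentElem_of_mem_closure_union (h : ∀ u ∈ U, Normalizes u C)
    (hU : ∀ u ∈ U, IsOfFinOrder u) (hx : x ∈ Subsemigroup.closure (C ∪ U : Set M))
    (hxU : x ∉ U) (he : IsIdempotentElem x) : x ∈ C := by
  obtain ⟨c, hc, u, hu, rfl⟩ := (mem_or_exists_mul_eq_of_mem_closure_union h hx).resolve_left hxU
  exact (h u hu).mul_mem_of_isIdempotentElem (hU u hu) hc he

end Normalizes

namespace Transf

variable {α : Type*}

/-- The full transformation monoid, extending the semigroup of transformations by the identity. -/
instance : Monoid (Transf α) where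
  one := ofPerm 1
  one_mul _ := rfl
  mul_one _ := rfl

theorem ofPerm_one : ofPerm (1 : Equiv.Perm α) = 1 := rfl

theorem ofPerm_mul (g h : Equiv.Perm α) : ofPerm (g * h) = ofPerm h * ofPerm g := rfl

theorem ofPerm_pow (g : Equiv.Perm α) (n : ℕ) : ofPerm (g ^ n) = ofPerm g ^ n := by
  induction n with
  | zero => rfl
  | succ n ih => rw [pow_succ, ofPerm_mul, ih, pow_succ']

theorem isOfFinOrder_ofPerm {g : Equiv.Perm α} (hg : IsOfFinOrder g) :
    IsOfFinOrder (ofPerm g) := by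
  obtain ⟨n, hn, hgn⟩ := isOfFinOrder_iff_pow_eq_one.1 hg
  exact isOfFinOrder_iff_pow_eq_one.2 ⟨n, hn, by rw [← ofPerm_pow, hgn, ofPerm_one]⟩

/-- The permutation group `G` inside the full transformation monoid. It is a copy of the opposite
group of `G`, since `Equiv.Perm` composes right-to-left and `Transf` left-to-right. -/
def permSubmonoid (G : Subgroup (Equiv.Perm α)) : Submonoid (Transf α) where
  carrier := ofPerm '' (G : Set (Equiv.Perm α))
  one_mem' := ⟨1, one_mem G, rfl⟩
  mul_mem' := by
    rintro _ _ ⟨g, hg, rfl⟩ ⟨h, hh, rfl⟩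
    exact ⟨h * g, mul_mem hh hg, rfl⟩

end Transf

open Transf

section ConjugateSubsemigroup

variable {α : Type*} {G : Subgroup (Equiv.Perm α)} {a c : Transf α}

theorem self_mem_genConj : a ∈ genConj G a :=
  Subsemigroup.subset_closure ⟨1, one_mem G, rfl⟩

theorem genConj_le_genGA : genConj G a ≤ genGA G a := by
  refine Subsemigroup.closure_le.2 ?_
  rintro _ ⟨g, hg, rfl⟩
  have hperm : ∀ k ∈ G, ofPerm k ∈ genGA G a := fun k hk =>
    Subsemigroup.subset_closure (.inr ⟨k, hk, rfl⟩)
  have ha : a ∈ genGA G a := Subsemigroup.subset_closure (.inl rfl)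
  exact mul_mem (mul_mem (hperm _ (inv_mem hg)) ha) (hperm g hg)

theorem genGA_le_closure_genConj_union :
    genGA G a ≤ Subsemigroup.closure (genConj G a ∪ permSubmonoid G : Set (Transf α)) :=
  Subsemigroup.closure_mono <|
    Set.insert_subset (.inl self_mem_genConj) Set.subset_union_right

theorem normalizes_genConj {u : Transf α} (hu : u ∈ permSubmonoid G) :
    Normalizes u (genConj G a) := by
  obtain ⟨g, hg, rfl⟩ := hu
  refine Normalizes.closure ?_
  rintro _ ⟨k, hk, rfl⟩
  refine ⟨_, ⟨g⁻¹ * k, mul_mem (inv_mem hg) hk, rfl⟩, ?_⟩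
  have hcancel : ofPerm g⁻¹ * ofPerm g = 1 := by rw [← ofPerm_mul, mul_inv_cancel, ofPerm_one]
  simp only [SemiconjBy, mul_inv_rev, inv_inv, ofPerm_mul, mul_assoc, hcancel, mul_one]

theorem mem_genConj_of_isIdempotentElem (hG : IsMulTorsion G) {e : Transf α}
    (he : e ∈ genGAminusG G a) (hidem : IsIdempotentElem e) : e ∈ genConj G a := by
  refine mem_of_isIdempotentElem_of_mem_closure_union (U := permSubmonoid G)
    (fun _ hu => normalizes_genConj hu) ?_ (genGA_le_closure_genConj_union he.1) he.2 hidem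
  rintro _ ⟨g, hg, rfl⟩
  exact isOfFinOrder_ofPerm (Submonoid.isOfFinOrder_coe.2 (hG ⟨g, hg⟩))

theorem injective_of_mem_genConj (hc : c ∈ genConj G a) (hinj : Function.Injective c.toFun) :
    Function.Injective a.toFun := by
  induction hc using Subsemigroup.closure_induction with
  | mem _ hx =>
    obtain ⟨g, _, rfl⟩ := hx
    have hconj : Function.Injective (g ∘ a.toFun ∘ ⇑g⁻¹) := hinj
    rwa [g.injective.of_comp_iff, Equiv.injective_comp] at hconj
  | mul x y _ _ ihx _ =>
    exact ihx (Function.Injective.of_comp (f := y.toFun) hinj)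

theorem surjective_of_mem_genConj (hc : c ∈ genConj G a) (hsurj : Function.Surjective c.toFun) :
    Function.Surjective a.toFun := by
  induction hc using Subsemigroup.closure_induction with
  | mem _ hx =>
    obtain ⟨g, _, rfl⟩ := hx
    have hconj : Function.Surjective (g ∘ a.toFun ∘ ⇑g⁻¹) := hsurj
    rwa [Equiv.comp_surjective, Equiv.surjective_comp] at hconj
  | mul x y _ _ _ ihy =>
    exact ihy (Function.Surjective.of_comp (g := x.toFun) hsurj)

theorem genConj_subset_genGAminusG (ha : ¬ Function.Bijective a.toFun) :
    (genConj G a : Set (Transf α)) ⊆ genGAminusG G a := by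
  refine fun c hc => ⟨genConj_le_genGA hc, ?_⟩
  rintro ⟨g, _, rfl⟩
  exact ha ⟨injective_of_mem_genConj hc g.injective, surjective_of_mem_genConj hc g.surjective⟩

end ConjugateSubsemigroup

theorem stmt7_general {α : Type*} (a : Transf α) (ha : ¬ Function.Bijective a.toFun)
    (G : Subgroup (Equiv.Perm α)) (hG : IsMulTorsion G) (h : IsIdemGen (genGAminusG G a)) :
    genGAminusG G a = (genConj G a : Set (Transf α)) := by
  refine Set.Subset.antisymm ?_ (genConj_subset_genGAminusG ha)
  rw [h]
  exact Subsemigroup.closure_le.2 fun e he => mem_genConj_of_isIdempotentElem hG he.1 he.2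

theorem stmt7 (n : ℕ) (hn : 1 ≤ n) (a : Transf (Fin n))
    (ha : ¬ Function.Bijective a.toFun) (G : Subgroup (Equiv.Perm (Fin n)))
    (h : IsIdemGen (genGAminusG G a)) :
    genGAminusG G a = (genConj G a : Set (Transf (Fin n))) :=
  stmt7_general a ha G isMulTorsion_of_finite h
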